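/- Let G be a finite connected simple graph with a cut-partition 𝒞 such that no shortest path in G uses two edges of the same cut C ∈ 𝒞. Then a vertex set V' ⊆ V(G) is a hull set of G if and only if for every cut C ∈ 𝒞, both sides of C contain a vertex of V'. -/

import Mathlib

/-- A set of vertices is (geodesically) convex. -/
def GConvex {V : Type*} (G : SimpleGraph V) (S : Set V) : Prop :=
  ∀ u ∈ S, ∀ w ∈ S, ∀ x : V, G.dist u x + G.dist x w = G.dist u w → x ∈ S

/-- The convex hull of a set of vertices: the smallest convex set containing it. -/
def GConvexHull {V : Type*} (G : SimpleGraph V) (S : Set V) : Set V :=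
  ⋂₀ {T : Set V | GConvex G T ∧ S ⊆ T}

/-- A cut of a connected simple graph: an inclusion-minimal set of edges whose
removal disconnects the graph. -/
def IsCut {V : Type*} (G : SimpleGraph V) (C : Set (Sym2 V)) : Prop :=
  C ⊆ G.edgeSet ∧ ¬ (G.deleteEdges C).Connected ∧
    ∀ C' : Set (Sym2 V), C' ⊂ C → (G.deleteEdges C').Connected

/-- A cut-partition: a set of cuts partitioning the edge set. -/
def IsCutPartition {V : Type*} (G : SimpleGraph V) (𝒞 : Set (Set (Sym2 V))) : Prop :=
  (∀ C ∈ 𝒞, IsCut G C) ∧ 𝒞.PairwiseDisjoint id ∧ ⋃₀ 𝒞 = G.edgeSet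

/-- A side of a cut `C`: the vertex set of a connected component of `G` minus `C`. -/
def IsSide {V : Type*} (G : SimpleGraph V) (C : Set (Sym2 V)) (S : Set V) : Prop :=
  ∃ x : V, S = {y : V | (G.deleteEdges C).Reachable y x}

open Classical in
/-- The number of edges of a walk (with multiplicity) belonging to a given edge set. -/
noncomputable def cutUse {V : Type*} (G : SimpleGraph V) {u w : V} (p : G.Walk u w)
    (C : Set (Sym2 V)) : ℕ :=
  p.edges.countP fun e => decide (e ∈ C)

section CutUse

variable {V : Type*} {G : SimpleGraph V} {C : Set (Sym2 V)}

open Classical in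
theorem cutUse_cons {u v w : V} (h : G.Adj u v) (p : G.Walk v w) (C : Set (Sym2 V)) :
    cutUse G (SimpleGraph.Walk.cons h p) C =
      cutUse G p C + if s(u, v) ∈ C then 1 else 0 := by
  simp [cutUse, List.countP_cons]

theorem cutUse_append {u v w : V} (p : G.Walk u v) (q : G.Walk v w) (C : Set (Sym2 V)) :
    cutUse G (p.append q) C = cutUse G p C + cutUse G q C := by
  simp [cutUse, SimpleGraph.Walk.edges_append]

theorem reachable_deleteEdges_of_cutUse_eq_zero {u w : V} (p : G.Walk u w)
    (hp : cutUse G p C = 0) : (G.deleteEdges C).Reachable u w := by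
  induction p with
  | nil => exact .refl _
  | cons h p ih =>
    rw [cutUse_cons] at hp
    split_ifs at hp with hC
    have hadj := (SimpleGraph.deleteEdges_adj).2 ⟨h, hC⟩
    exact hadj.reachable.trans (ih (by omega))

theorem one_le_cutUse {u w : V} (p : G.Walk u w) (h : ¬ (G.deleteEdges C).Reachable u w) :
    1 ≤ cutUse G p C :=
  Nat.one_le_iff_ne_zero.2 fun h0 => h (reachable_deleteEdges_of_cutUse_eq_zero p h0)

/-- The endpoints of an edge of a cut lie on different sides of the cut. -/
theorem IsCut.not_reachable {a b : V} (hC : IsCut G C) (he : s(a, b) ∈ C) :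
    ¬ (G.deleteEdges C).Reachable a b := by
  intro hab
  have hsub : C \ {s(a, b)} ⊂ C :=
    Set.sdiff_singleton_ssubset.2 he
  have hconn := hC.2.2 _ hsub
  have := hconn.nonempty
  refine hC.2.1 ⟨fun x y => ?_⟩
  obtain ⟨p⟩ := hconn.preconnected x y
  induction p with
  | nil => exact .refl _
  | @cons u v w h p ih =>
    refine SimpleGraph.Reachable.trans ?_ ih
    rw [SimpleGraph.deleteEdges_adj] at h
    by_cases huv : s(u, v) ∈ C
    · have heq : s(u, v) = s(a, b) := by
        by_contra hne
        exact h.2 ⟨huv, hne⟩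
      rcases Sym2.eq_iff.1 heq with ⟨rfl, rfl⟩ | ⟨rfl, rfl⟩
      · exact hab
      · exact hab.symm
    · exact (SimpleGraph.deleteEdges_adj.2 ⟨h.1, huv⟩).reachable

theorem IsCut.not_reachable_of_cutUse_eq_one {u w : V} (hC : IsCut G C) (p : G.Walk u w)
    (hp : cutUse G p C = 1) : ¬ (G.deleteEdges C).Reachable u w := by
  induction p with
  | nil => simp [cutUse] at hp
  | cons h p ih =>
    rw [cutUse_cons] at hp
    split_ifs at hp with he
    · intro hr
      exact hC.not_reachable he
        (hr.trans (reachable_deleteEdges_of_cutUse_eq_zero p (by omega)).symm)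
    · intro hr
      exact ih hp ((SimpleGraph.deleteEdges_adj.2 ⟨h, he⟩).reachable.symm.trans hr)

/-- The length of a walk is the total number of times it crosses the cuts of a cut-partition. -/
theorem IsCutPartition.length_eq_sum_cutUse {𝒟 : Finset (Set (Sym2 V))}
    (h𝒟 : IsCutPartition G (𝒟 : Set (Set (Sym2 V)))) {u w : V} (p : G.Walk u w) :
    p.length = ∑ C ∈ 𝒟, cutUse G p C := by
  classical
  induction p with
  | nil => simp [cutUse]
  | @cons u v w h p ih =>
    obtain ⟨C, hC, heC⟩ : s(u, v) ∈ ⋃₀ (𝒟 : Set (Set (Sym2 V))) := by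
      rw [h𝒟.2.2]
      exact h
    have hsum : ∑ D ∈ 𝒟, (if s(u, v) ∈ D then 1 else 0) = 1 := by
      rw [Finset.sum_eq_single_of_mem C hC, if_pos heC]
      intro D hD hne
      exact if_neg fun heD => Set.disjoint_left.1 (h𝒟.2.1 hD hC hne) heD heC
    simp only [SimpleGraph.Walk.length_cons, cutUse_cons, Finset.sum_add_distrib, ih]
    congr 1
    exact hsum.symm

/-- A walk crossing each cut of a cut-partition at most once is a shortest walk. -/
theorem IsCutPartition.length_le_length [Finite V] {𝒞 : Set (Set (Sym2 V))}
    (h𝒞 : IsCutPartition G 𝒞) {u w : V} (p q : G.Walk u w)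
    (hp : ∀ C ∈ 𝒞, cutUse G p C ≤ 1) : p.length ≤ q.length := by
  lift 𝒞 to Finset (Set (Sym2 V)) using Set.toFinite 𝒞
  rw [h𝒞.length_eq_sum_cutUse p, h𝒞.length_eq_sum_cutUse q]
  refine Finset.sum_le_sum fun C hC => ?_
  have hle := hp C hC
  rcases Nat.le_one_iff_eq_zero_or_eq_one.1 hle with h0 | h1
  · omega
  · rw [h1]
    exact one_le_cutUse q ((h𝒞.1 C hC).not_reachable_of_cutUse_eq_one p h1)

theorem subset_gConvexHull (G : SimpleGraph V) (S : Set V) : S ⊆ GConvexHull G S :=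
  Set.subset_sInter fun _ hT => hT.2

theorem gConvex_gConvexHull (G : SimpleGraph V) (S : Set V) : GConvex G (GConvexHull G S) :=
  fun u hu w hw x hx T hT => hT.1 u (hu T hT) w (hw T hT) x hx

/-- If no shortest path crosses `C` twice, then the complement of a side of `C` is convex. -/
theorem IsSide.gConvex_compl (hconn : G.Connected) {S : Set V} (hS : IsSide G C S)
    (hgeo : ∀ (u w : V) (p : G.Walk u w), p.length = G.dist u w → cutUse G p C ≤ 1) :
    GConvex G Sᶜ := by
  obtain ⟨s, rfl⟩ := hS
  intro u hu w hw x hx hxS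
  obtain ⟨p, hp⟩ := hconn.exists_walk_length_eq_dist u x
  obtain ⟨q, hq⟩ := hconn.exists_walk_length_eq_dist x w
  have hle := hgeo u w (p.append q) (by rw [SimpleGraph.Walk.length_append, hp, hq, hx])
  rw [cutUse_append] at hle
  have h₁ := one_le_cutUse (C := C) p fun h => hu (h.trans hxS)
  have h₂ := one_le_cutUse (C := C) q fun h => hw (h.symm.trans hxS)
  omega

/-- If `ab` is an edge of `C` and `v` lies on the side of `b`, then `b` is on a shortest path
from `v` to `a`. -/
theorem IsCutPartition.dist_add_dist_of_reachable [Finite V] (hconn : G.Connected)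
    {𝒞 : Set (Set (Sym2 V))} (h𝒞 : IsCutPartition G 𝒞)
    (hgeo : ∀ (u w : V) (p : G.Walk u w), p.length = G.dist u w →
      ∀ C ∈ 𝒞, cutUse G p C ≤ 1)
    (hC : C ∈ 𝒞) {a b v : V} (hab : G.Adj a b) (he : s(a, b) ∈ C)
    (hv : (G.deleteEdges C).Reachable b v) :
    G.dist a b + G.dist b v = G.dist a v := by
  obtain ⟨p, hp⟩ := hconn.exists_walk_length_eq_dist b v
  obtain ⟨q, hq⟩ := hconn.exists_walk_length_eq_dist a v
  have hle : (SimpleGraph.Walk.cons hab p).length ≤ q.length := by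
    refine h𝒞.length_le_length _ q fun D hD => ?_
    have hpD := hgeo b v p hp D hD
    rw [cutUse_cons]
    split_ifs with heD
    · obtain rfl : D = C := by
        by_contra hne
        exact Set.disjoint_left.1 (h𝒞.2.1 hD hC hne) heD he
      have hp1 : cutUse G p D ≠ 1 := fun h1 =>
        (h𝒞.1 D hD).not_reachable_of_cutUse_eq_one p h1 hv
      omega
    · exact hpD
  have htri := hconn.dist_triangle (u := a) (v := b) (w := v)
  rw [SimpleGraph.Walk.length_cons, hp, hq] at hle
  rw [SimpleGraph.dist_eq_one_iff_adj.2 hab] at htri ⊢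
  omega

end CutUse

/-- For a cut-partition where no shortest path uses two edges of the same cut,
a (nonempty) vertex set is a hull set iff it meets both sides of every cut. -/
theorem hullSet_iff_meets_both_sides {V : Type*} [Fintype V] (G : SimpleGraph V)
    (hconn : G.Connected) (𝒞 : Set (Set (Sym2 V))) (hpart : IsCutPartition G 𝒞)
    (hgeo : ∀ (u w : V) (p : G.Walk u w), p.length = G.dist u w →
      ∀ C ∈ 𝒞, cutUse G p C ≤ 1)
    (V' : Set V) (hne : V'.Nonempty) :
    GConvexHull G V' = Set.univ ↔
      ∀ C ∈ 𝒞, ∀ S : Set V, IsSide G C S → (S ∩ V').Nonempty := by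
  constructor
  · intro hull C hC S hS
    by_contra hempty
    have hsub : V' ⊆ Sᶜ := fun x hxV hxS => hempty ⟨x, hxS, hxV⟩
    have hconv := hS.gConvex_compl hconn fun u w p hp => hgeo u w p hp C hC
    obtain ⟨s, rfl⟩ := hS
    have hs : s ∈ GConvexHull G V' := hull ▸ Set.mem_univ s
    exact hs _ ⟨hconv, hsub⟩ (SimpleGraph.Reachable.refl s)
  · intro hmeet
    by_contra hne_univ
    obtain ⟨y, hy⟩ := (Set.ne_univ_iff_exists_notMem _).1 hne_univ
    obtain ⟨x, hx⟩ := hne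
    obtain ⟨p⟩ := hconn.preconnected x y
    obtain ⟨d, -, hfst, hsnd⟩ :=
      p.exists_boundary_dart (GConvexHull G V') (subset_gConvexHull G V' hx) hy
    obtain ⟨C, hC, he⟩ : s(d.fst, d.snd) ∈ ⋃₀ 𝒞 := by
      rw [hpart.2.2]
      exact d.adj
    obtain ⟨v, hvS, hvV⟩ := hmeet C hC _ ⟨d.snd, rfl⟩
    exact hsnd (gConvex_gConvexHull G V' _ hfst v (subset_gConvexHull G V' hvV) _
      (hpart.dist_add_dist_of_reachable hconn hgeo hC d.adj he (SimpleGraph.Reachable.symm hvS)))
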